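/- arXiv:math/0403193 — 2 statements merged into one kernel-verified Lean document; each statement's English description precedes it below -/
import Mathlib

section
/- There exist a nonempty compact Hausdorff connected topological space K that is an F-space (i.e., any two disjoint open F_σ subsets of K have disjoint closures) and a continuous function f : K → ℝ such that the set Ω_f = ⋃_{x ∈ ℝ} Int(f⁻¹({x})) is not dense in K. -/
open Set Topology

noncomputable section

/-- A set is an `Fσ` set if it is a countable union of closed sets. -/
def IsFSigma {X : Type*} [TopologicalSpace X] (s : Set X) : Prop :=
  ∃ F : ℕ → Set X, (∀ n, IsClosed (F n)) ∧ s = ⋃ n, F n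

/-- A topological space is an `F`-space if any two disjoint open `Fσ` subsets
have disjoint closures. -/
def IsFSpace (X : Type*) [TopologicalSpace X] : Prop :=
  ∀ s t : Set X, IsOpen s → IsOpen t → IsFSigma s → IsFSigma t → Disjoint s t →
    Disjoint (closure s) (closure t)

/-!
Closed subsets of the remainder `βX \ X` of a σ-compact locally compact Hausdorff space `X` are
compact `F`-spaces, so it suffices to find a connected one carrying a suitable function.

Let `H ⊆ βℝ` be the set of cluster points of `ℝ` at `+∞`, a continuum, and let `g : βℝ → [-1, 1]`
extend `sin`, so that `g` maps `H` onto `[-1, 1]`. By Zorn's lemma `g` is irreducible on some closed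
`E ⊆ H`, hence constant on no nonempty relatively open subset of `E`. The projection
`π : β(ℝ × [0, 1]) → βℝ` is open with connected fibers and has the sections `σ_y` extending
`x ↦ (x, y)`. The comb `K = π⁻¹(E) ∪ σ₀(H)` is then connected, because its teeth `π⁻¹(e)` all meet
its base `σ₀(H)`. Off the base `K` coincides with `π⁻¹(E)`, and there `g ∘ π` is locally constant
nowhere because `π` is open.
-/

open Filter

section FSigma

variable {X Y : Type*} [TopologicalSpace X] [TopologicalSpace Y] {s t : Set X}

theorem IsFSigma.image (hs : IsFSigma s) {f : X → Y} (hf : IsClosedMap f) :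
    IsFSigma (f '' s) := by
  obtain ⟨F, hF, rfl⟩ := hs
  exact ⟨fun n => f '' F n, fun n => hf _ (hF n), image_iUnion⟩

theorem IsFSigma.exists_isOpen_seq_closure_subset [NormalSpace X] (hs : IsFSigma s)
    (ht : IsOpen t) (hst : s ⊆ t) :
    ∃ u : ℕ → Set X, (∀ n, IsOpen (u n)) ∧ s ⊆ ⋃ n, u n ∧ ∀ n, closure (u n) ⊆ t := by
  obtain ⟨F, hF, rfl⟩ := hs
  choose u hu hFu hut using fun n =>
    normal_exists_closure_subset (hF n) ht ((subset_iUnion F n).trans hst)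
  exact ⟨u, hu, iUnion_mono hFu, hut⟩

theorem IsFSigma.hasSeparatingCover [NormalSpace X] (hs : IsFSigma s)
    (hst : Disjoint s (closure t)) : HasSeparatingCover s t := by
  obtain ⟨u, hu, hsu, hut⟩ := hs.exists_isOpen_seq_closure_subset
    isClosed_closure.isOpen_compl hst.subset_compl_right
  exact ⟨u, hsu, fun n =>
    ⟨hu n, (disjoint_compl_left.mono_left (hut n)).mono_right subset_closure⟩⟩

theorem IsFSigma.separatedNhds [NormalSpace X] (hs : IsFSigma s) (ht : IsFSigma t)
    (hst : Disjoint s (closure t)) (hts : Disjoint t (closure s)) : SeparatedNhds s t :=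
  hasSeparatingCovers_iff_separatedNhds.1 ⟨hs.hasSeparatingCover hst, ht.hasSeparatingCover hts⟩

end FSigma

section Remainder

variable {X : Type*} [TopologicalSpace X]

theorem isClosed_iUnion_diff_interior_compactExhaustion (C : CompactExhaustion X)
    {D : ℕ → Set X} (hD : ∀ n, IsClosed (D n)) : IsClosed (⋃ n, D n \ interior (C n)) := by
  refine LocallyFinite.isClosed_iUnion (fun x => ?_) fun n => (hD n).sdiff isOpen_interior
  obtain ⟨m, hm⟩ := C.exists_mem x
  refine ⟨interior (C (m + 1)), isOpen_interior.mem_nhds (C.subset_interior_succ m hm),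
    (finite_lt_nat (m + 1)).subset ?_⟩
  rintro n ⟨y, hyD, hyC⟩
  by_contra hn
  exact hyD.2 (interior_mono (C.subset (not_lt.1 hn)) hyC)

theorem disjoint_closure_image_stoneCechUnit [NormalSpace X] {P Q : Set X} (hP : IsClosed P)
    (hQ : IsClosed Q) (hPQ : Disjoint P Q) :
    Disjoint (closure (stoneCechUnit '' P)) (closure (stoneCechUnit '' Q)) := by
  obtain ⟨f, hf0, hf1, hf⟩ := exists_continuous_zero_one_of_isClosed hP hQ hPQ
  have hfc : Continuous fun x => (⟨f x, hf x⟩ : Icc (0 : ℝ) 1) := f.continuous.subtype_mk _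
  have closure_subset_fiber {S : Set X} {c : Icc (0 : ℝ) 1} (hS : ∀ x ∈ S, f x = c) :
      closure (stoneCechUnit '' S) ⊆ stoneCechExtend hfc ⁻¹' {c} := by
    refine closure_minimal ?_ (isClosed_singleton.preimage (continuous_stoneCechExtend hfc))
    rintro _ ⟨x, hx, rfl⟩
    exact (stoneCechExtend_stoneCechUnit hfc x).trans (Subtype.ext (hS x hx))
  exact ((disjoint_singleton.2 zero_ne_one).preimage _).mono
    (closure_subset_fiber fun _ hx => hf0 hx) (closure_subset_fiber fun _ hx => hf1 hx)

theorem subset_closure_image_preimage_stoneCechUnit {U : Set (StoneCech X)}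
    (hU : IsOpen U) : U ⊆ closure (stoneCechUnit '' (stoneCechUnit ⁻¹' U)) := by
  rw [image_preimage_eq_inter_range]
  exact denseRange_stoneCechUnit.open_subset_closure_inter hU

variable [WeaklyLocallyCompactSpace X] [SigmaCompactSpace X]

theorem IsFSigma.exists_isClosed_subset_closure_image_stoneCechUnit {A U : Set (StoneCech X)}
    (hA : IsFSigma A) (hAX : Disjoint A (range stoneCechUnit)) (hU : IsOpen U) (hAU : A ⊆ U) :
    ∃ P : Set X, IsClosed P ∧ P ⊆ stoneCechUnit ⁻¹' U ∧ A ⊆ closure (stoneCechUnit '' P) := by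
  obtain ⟨u, hu, hAu, huU⟩ := hA.exists_isOpen_seq_closure_subset hU hAU
  let C := CompactExhaustion.choice X
  -- Removing `C n` makes the family locally finite, and costs nothing as `A` lies outside `X`.
  refine ⟨⋃ n, stoneCechUnit ⁻¹' closure (u n) \ interior (C n),
    isClosed_iUnion_diff_interior_compactExhaustion C fun n =>
      isClosed_closure.preimage continuous_stoneCechUnit,
    iUnion_subset fun n => sdiff_subset.trans (preimage_mono (huU n)), fun p hp => ?_⟩
  obtain ⟨n, hn⟩ := mem_iUnion.1 (hAu hp)
  have hCn : IsClosed (stoneCechUnit '' C n) :=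
    ((C.isCompact n).image continuous_stoneCechUnit).isClosed
  have hpC : p ∉ stoneCechUnit '' C n := fun h =>
    disjoint_left.1 hAX hp (image_subset_range _ _ h)
  refine closure_mono (image_mono ?_)
    (subset_closure_image_preimage_stoneCechUnit ((hu n).sdiff hCn) ⟨hn, hpC⟩)
  exact fun x hx => mem_iUnion.2
    ⟨n, subset_closure hx.1, fun h => hx.2 (mem_image_of_mem _ (interior_subset h))⟩

variable [T2Space X]

theorem IsFSigma.disjoint_closure_of_separatedNhds {A B : Set (StoneCech X)}
    (hA : IsFSigma A) (hB : IsFSigma B) (hAX : Disjoint A (range stoneCechUnit))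
    (hBX : Disjoint B (range stoneCechUnit)) (hAB : SeparatedNhds A B) :
    Disjoint (closure A) (closure B) := by
  obtain ⟨U, V, hU, hV, hAU, hBV, hUV⟩ := hAB
  obtain ⟨P, hP, hPU, hAP⟩ :=
    hA.exists_isClosed_subset_closure_image_stoneCechUnit hAX hU hAU
  obtain ⟨Q, hQ, hQV, hBQ⟩ :=
    hB.exists_isClosed_subset_closure_image_stoneCechUnit hBX hV hBV
  exact (disjoint_closure_image_stoneCechUnit hP hQ ((hUV.preimage _).mono hPU hQV)).mono
    (closure_minimal hAP isClosed_closure) (closure_minimal hBQ isClosed_closure)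

theorem isFSpace_of_disjoint_range_stoneCechUnit {K : Set (StoneCech X)} (hK : IsClosed K)
    (hKX : Disjoint K (range stoneCechUnit)) : IsFSpace K := by
  intro s t hs ht hsF htF hst
  have hval : IsClosedEmbedding ((↑) : K → StoneCech X) := hK.isClosedEmbedding_subtypeVal
  have disjoint_range (r : Set K) : Disjoint ((↑) '' r) (range (stoneCechUnit (α := X))) :=
    hKX.mono_left (Subtype.coe_image_subset K r)
  have disjoint_image {r r' : Set K} (h : Disjoint r r') :
      Disjoint ((↑) '' r : Set (StoneCech X)) ((↑) '' r') :=
    (disjoint_image_iff Subtype.val_injective).2 h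
  have hsF' := hsF.image hval.isClosedMap
  have htF' := htF.image hval.isClosedMap
  have hsep : SeparatedNhds ((↑) '' s : Set (StoneCech X)) ((↑) '' t) := by
    refine hsF'.separatedNhds htF' ?_ ?_
    · rw [hval.closure_image_eq]
      exact disjoint_image (hst.closure_right hs)
    · rw [hval.closure_image_eq]
      exact disjoint_image (hst.symm.closure_right ht)
  have hcl := hsF'.disjoint_closure_of_separatedNhds htF' (disjoint_range s) (disjoint_range t) hsep
  rwa [hval.closure_image_eq, hval.closure_image_eq,
    disjoint_image_iff Subtype.val_injective] at hcl

end Remainder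

section Connectedness

variable {A B : Type*} [TopologicalSpace A] [TopologicalSpace B]

theorem isPreconnected_of_forall_disjoint_isOpen [NormalSpace A] {s : Set A} (hs : IsClosed s)
    (h : ∀ U V : Set A, IsOpen U → IsOpen V → Disjoint U V → s ⊆ U ∪ V → s ⊆ U ∨ s ⊆ V) :
    IsPreconnected s := by
  rw [isPreconnected_iff_subset_of_fully_disjoint_closed hs]
  intro P Q hP hQ hsPQ hPQ
  obtain ⟨U, V, hU, hV, hPU, hQV, hUV⟩ := normal_separation hP hQ hPQ
  refine (h U V hU hV hUV (hsPQ.trans (union_subset_union hPU hQV))).imp ?_ ?_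
  · exact fun hsU => (hUV.mono hsU hQV).subset_left_of_subset_union hsPQ
  · exact fun hsV => (hUV.symm.mono hsV hPU).subset_right_of_subset_union hsPQ

theorem isPreconnected_preimage_singleton_of_dense [NormalSpace A] [T1Space B] {π : A → B}
    {σ : B → A} (hπ : Continuous π) (hπc : IsClosedMap π) (hσ : Continuous σ)
    (hπσ : Function.RightInverse σ π) {D : Set A} (hD : Dense D)
    (hC : ∀ a ∈ D, ∃ C ⊆ π ⁻¹' {π a}, IsPreconnected C ∧ a ∈ C ∧ σ (π a) ∈ C) (b : B) :
    IsPreconnected (π ⁻¹' {b}) := by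
  have fiber_subset {U V : Set A} (hU : IsOpen U) (hV : IsOpen V) (hUV : Disjoint U V)
      (hbUV : π ⁻¹' {b} ⊆ U ∪ V) (hσU : σ b ∈ U) : π ⁻¹' {b} ⊆ U := by
    have hN : IsOpen ((π '' (U ∪ V)ᶜ)ᶜ ∩ σ ⁻¹' U) :=
      (hπc _ (hU.union hV).isClosed_compl).isOpen_compl.inter (hU.preimage hσ)
    have hbN : b ∈ (π '' (U ∪ V)ᶜ)ᶜ ∩ σ ⁻¹' U :=
      ⟨fun ⟨a, ha, hab⟩ => ha (hbUV hab), hσU⟩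
    intro a hab
    by_contra haU
    have haV : a ∈ V := (hbUV hab).resolve_left haU
    obtain ⟨d, ⟨hdV, hdN⟩, hdD⟩ := hD.inter_open_nonempty _ (hV.inter (hN.preimage hπ))
      ⟨a, haV, by rwa [mem_preimage, show π a = b from hab]⟩
    obtain ⟨C, hCd, hCconn, hdC, hσC⟩ := hC d hdD
    have hCUV : C ⊆ U ∪ V := fun c hc => by
      by_contra hcUV
      exact hdN.1 ⟨c, hcUV, hCd hc⟩
    have hCU : C ⊆ U := hCconn.subset_left_of_subset_union hU hV hUV hCUV ⟨_, hσC, hdN.2⟩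
    exact disjoint_left.1 hUV (hCU hdC) hdV
  refine isPreconnected_of_forall_disjoint_isOpen (isClosed_singleton.preimage hπ) ?_
  intro U V hU hV hUV hbUV
  refine (hbUV (hπσ b)).imp (fiber_subset hU hV hUV hbUV) ?_
  exact fiber_subset hV hU hUV.symm (union_comm U V ▸ hbUV)

end Connectedness

section ClusterSet

variable {X A Z : Type*} [TopologicalSpace A] {l : Filter X} {u : X → A}

/-- The set of cluster points of `u` along `l`. For `u = stoneCechUnit` and `l = atTop` on `ℝ` it is
the positive end of the line in its Stone–Čech compactification. -/
def mapClusterSet (l : Filter X) (u : X → A) : Set A :=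
  {p | MapClusterPt p l u}

theorem isClosed_mapClusterSet : IsClosed (mapClusterSet l u) :=
  isClosed_setOfPred_clusterPt

theorem eventually_mem_of_mapClusterSet_subset [CompactSpace A] {O : Set A} (hO : IsOpen O)
    (h : mapClusterSet l u ⊆ O) : ∀ᶠ x in l, u x ∈ O := by
  by_contra hfreq
  obtain ⟨p, hpO, hp⟩ :=
    hO.isClosed_compl.isCompact.exists_mapClusterPt_of_frequently (not_eventually.1 hfreq)
  exact hpO (h hp)

theorem mapClusterSet_subset_closure {s : Set X} {t : Set A} (hs : s ∈ l) (hst : u '' s ⊆ t) :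
    mapClusterSet l u ⊆ closure t :=
  fun _ hp => clusterPt_iff_forall_mem_closure.1 hp t
    (mem_map.2 (mem_of_superset hs (image_subset_iff.1 hst)))

theorem isPreconnected_mapClusterSet [TopologicalSpace X] [CompactSpace A] [NormalSpace A]
    {ι : Sort*} {p : ι → Prop} {s : ι → Set X} (hl : l.HasBasis p s)
    (hs : ∀ i, p i → IsPreconnected (s i)) (hu : Continuous u) :
    IsPreconnected (mapClusterSet l u) := by
  refine isPreconnected_of_forall_disjoint_isOpen isClosed_mapClusterSet ?_
  intro U V hU hV hUV hsub
  obtain ⟨i, hi, hsi⟩ := hl.mem_iff.1 (eventually_mem_of_mapClusterSet_subset (hU.union hV) hsub)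
  have himage : IsPreconnected (u '' s i) := (hs i hi).image u hu.continuousOn
  refine (himage.subset_or_subset hU hV hUV (image_subset_iff.2 hsi)).imp ?_ ?_
  · intro hiU
    have hcl : mapClusterSet l u ⊆ closure U := mapClusterSet_subset_closure (hl.mem_of_mem hi) hiU
    exact ((hUV.closure_left hV).mono_left hcl).subset_left_of_subset_union hsub
  · intro hiV
    have hcl : mapClusterSet l u ⊆ closure V := mapClusterSet_subset_closure (hl.mem_of_mem hi) hiV
    exact ((hUV.symm.closure_left hU).mono_left hcl).subset_right_of_subset_union hsub

theorem image_mapClusterSet [CompactSpace A] [TopologicalSpace Z] [T2Space Z] {g : A → Z}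
    (hg : Continuous g) : g '' mapClusterSet l u = mapClusterSet l (g ∘ u) := by
  ext c
  constructor
  · rintro ⟨p, hp, rfl⟩
    exact hp.continuousAt_comp hg.continuousAt
  · intro hc
    obtain ⟨U, hUl, hUc⟩ := mapClusterPt_iff_ultrafilter.1 hc
    obtain ⟨p, -, hp⟩ := isCompact_univ.ultrafilter_le_nhds (U.map u) (by simp)
    exact ⟨p, mapClusterPt_iff_ultrafilter.2 ⟨U, hUl, hp⟩,
      tendsto_nhds_unique ((hg.tendsto p).comp hp) hUc⟩

theorem disjoint_mapClusterSet_range [TopologicalSpace X] (hu : IsInducing u)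
    (hl : ∀ x, ¬ ClusterPt x l) : Disjoint (mapClusterSet l u) (range u) := by
  rw [disjoint_right]
  rintro _ ⟨x, rfl⟩ hx
  exact hl x (hu.mapClusterPt_iff.1 hx)

end ClusterSet

section NowhereLocallyConstant

variable {A B Z Z' : Type*} [TopologicalSpace A] [TopologicalSpace B]

/-- `f` is constant on no nonempty relatively open subset of `s`, the latter being written as the
traces `O ∩ s` of ambient open sets. When `s` is open, this says that `Ω_f` misses `s`. -/
def IsNowhereLocallyConstantOn (f : A → Z) (s : Set A) : Prop :=
  ∀ O : Set A, IsOpen O → (O ∩ s).Nonempty → (f '' (O ∩ s)).Nontrivial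

namespace IsNowhereLocallyConstantOn

theorem injective_comp {f : A → Z} {s : Set A} (h : IsNowhereLocallyConstantOn f s) {j : Z → Z'}
    (hj : Function.Injective j) : IsNowhereLocallyConstantOn (j ∘ f) s := fun O hO hOs => by
  rw [image_comp]
  exact (h O hO hOs).image hj

theorem image {π : A → B} {f : B → Z} {s : Set A} (h : IsNowhereLocallyConstantOn (f ∘ π) s)
    (hπ : Continuous π) : IsNowhereLocallyConstantOn f (π '' s) := fun O hO hOs => by
  rw [← image_preimage_inter] at hOs ⊢
  rw [← image_comp]
  exact h _ (hO.preimage hπ) hOs.of_image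

theorem preimage {π : A → B} {f : B → Z} {t : Set B} (h : IsNowhereLocallyConstantOn f t)
    (hπ : IsOpenMap π) : IsNowhereLocallyConstantOn (f ∘ π) (π ⁻¹' t) := fun O hO hOs => by
  rw [image_comp, image_inter_preimage]
  exact h _ (hπ O hO) (image_inter_preimage π O t ▸ hOs.image π)

theorem not_dense_iUnion_interior_fiber {f : A → Z} {s K W : Set A}
    (h : IsNowhereLocallyConstantOn f s) (hsK : s ⊆ K) (hW : IsOpen W) (hWK : W ∩ K ⊆ s)
    (hne : (W ∩ K).Nonempty) :
    ¬ Dense (⋃ c, interior ((fun k : K => f k) ⁻¹' {c})) := by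
  intro hdense
  obtain ⟨p, hpW, hpK⟩ := hne
  obtain ⟨k, hkW, hk⟩ := hdense.inter_open_nonempty _ (hW.preimage continuous_subtype_val)
    ⟨⟨p, hpK⟩, hpW⟩
  obtain ⟨c, hkc⟩ := mem_iUnion.1 hk
  obtain ⟨O, hO, hOc⟩ :=
    isOpen_induced_iff.1 (isOpen_interior (s := (fun k : K => f k) ⁻¹' {c}))
  have hkO : k ∈ (↑) ⁻¹' O := hOc ▸ hkc
  refine (h O hO ⟨k, hkO, hWK ⟨hkW, k.2⟩⟩).not_subset_singleton (x := c) ?_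
  rintro _ ⟨q, ⟨hqO, hqs⟩, rfl⟩
  have hq : (⟨q, hsK hqs⟩ : K) ∈ interior ((fun k : K => f k) ⁻¹' {c}) := hOc ▸ hqO
  exact interior_subset (s := (fun k : K => f k) ⁻¹' {c}) hq

end IsNowhereLocallyConstantOn

end NowhereLocallyConstant

section Irreducible

universe u

variable {A Z : Type u} [TopologicalSpace A] [TopologicalSpace Z] [T2Space Z] [PerfectSpace Z]

theorem exists_isCompact_image_eq_univ_isNowhereLocallyConstantOn [CompactSpace A] {f : A → Z}
    (hf : Continuous f) (hsurj : Function.Surjective f) :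
    ∃ E : Set A, IsCompact E ∧ f '' E = univ ∧ IsNowhereLocallyConstantOn f E := by
  obtain ⟨E, hE, hfE, hmin⟩ := exists_compact_surjective_zorn_subset hf hsurj
  refine ⟨E, isCompact_iff_compactSpace.2 hE, hfE, fun O hO hOE => ?_⟩
  by_contra hconst
  obtain ⟨a, haO, haE⟩ := hOE
  have himage : ∀ e ∈ O ∩ E, f e = f a := fun e he =>
    not_nontrivial_iff.1 hconst (mem_image_of_mem f he) (mem_image_of_mem f ⟨haO, haE⟩)
  let E₀ : Set E := (↑) ⁻¹' Oᶜ
  have hE₀ : IsClosed E₀ := hO.isClosed_compl.preimage continuous_subtype_val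
  have hE₀_ne : E₀ ≠ univ := fun h => (h ▸ mem_univ _ : (⟨a, haE⟩ : E) ∈ E₀) haO
  have hclosed : IsClosed (E.domRestrict f '' E₀) :=
    (hE₀.isCompact.image (hf.comp continuous_subtype_val)).isClosed
  have hcompl : {f a}ᶜ ⊆ E.domRestrict f '' E₀ := fun z hz => by
    obtain ⟨e, heE, rfl⟩ : z ∈ f '' E := hfE ▸ mem_univ z
    exact ⟨⟨e, heE⟩, fun heO => hz (himage e ⟨heO, heE⟩), rfl⟩
  exact hmin E₀ hE₀_ne hE₀ (((dense_compl_singleton (f a)).mono hcompl).closure_eq ▸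
    hclosed.closure_eq.symm)

theorem exists_subset_isNowhereLocallyConstantOn [T2Space A] [Nonempty Z] {f : A → Z} {H : Set A}
    (hf : Continuous f) (hH : IsCompact H) (hfH : f '' H = univ) :
    ∃ E ⊆ H, IsClosed E ∧ E.Nonempty ∧ IsNowhereLocallyConstantOn f E := by
  have : CompactSpace H := isCompact_iff_compactSpace.1 hH
  have hsurj : Function.Surjective (f ∘ ((↑) : H → A)) := by
    rw [← range_eq_univ, range_comp, Subtype.range_coe, hfH]
  obtain ⟨E, hE, hfE, hconst⟩ := exists_isCompact_image_eq_univ_isNowhereLocallyConstantOn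
    (hf.comp continuous_subtype_val) hsurj
  have hE_ne : E.Nonempty := by
    rw [← image_nonempty, hfE]
    exact univ_nonempty
  exact ⟨(↑) '' E, Subtype.coe_image_subset H E, (hE.image continuous_subtype_val).isClosed,
    hE_ne.image _, hconst.image continuous_subtype_val⟩

end Irreducible

section StoneCechProd

variable {X Y : Type*} [TopologicalSpace X] [TopologicalSpace Y]

/-- The extension `β(X × Y) → βX` of the first projection. -/
def stoneCechFst : StoneCech (X × Y) → StoneCech X :=
  stoneCechExtend (continuous_stoneCechUnit.comp continuous_fst)

/-- The extension `βX → β(X × Y)` of `x ↦ (x, y)`, a section of `stoneCechFst`. -/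
def stoneCechSlice (y : Y) : StoneCech X → StoneCech (X × Y) :=
  stoneCechExtend (continuous_stoneCechUnit.comp (Continuous.prodMk_left y))

theorem continuous_stoneCechFst : Continuous (stoneCechFst : StoneCech (X × Y) → StoneCech X) :=
  continuous_stoneCechExtend _

theorem continuous_stoneCechSlice (y : Y) :
    Continuous (stoneCechSlice y : StoneCech X → StoneCech (X × Y)) :=
  continuous_stoneCechExtend _

@[simp]
theorem stoneCechFst_stoneCechUnit (z : X × Y) :
    stoneCechFst (stoneCechUnit z) = stoneCechUnit z.1 :=
  stoneCechExtend_stoneCechUnit _ z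

@[simp]
theorem stoneCechSlice_stoneCechUnit (x : X) (y : Y) :
    stoneCechSlice y (stoneCechUnit x) = stoneCechUnit (x, y) :=
  stoneCechExtend_stoneCechUnit _ x

theorem rightInverse_stoneCechSlice_stoneCechFst (y : Y) :
    Function.RightInverse (stoneCechSlice y) (stoneCechFst (X := X)) :=
  congrFun (stoneCech_hom_ext (continuous_stoneCechFst.comp (continuous_stoneCechSlice y))
    continuous_id (by ext x; simp))

theorem stoneCechExtend_snd_stoneCechSlice [CompactSpace Y] [T2Space Y] (y : Y)
    (e : StoneCech X) : stoneCechExtend (continuous_snd (X := X)) (stoneCechSlice y e) = y :=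
  congrFun (stoneCech_hom_ext (g₂ := fun _ => y)
    ((continuous_stoneCechExtend continuous_snd).comp (continuous_stoneCechSlice y))
    continuous_const (by ext x; simp [stoneCechExtend_stoneCechUnit])) e

theorem isPreconnected_preimage_stoneCechFst [Nonempty Y] [PreconnectedSpace Y]
    (e : StoneCech X) : IsPreconnected (stoneCechFst (Y := Y) ⁻¹' {e}) := by
  obtain ⟨y₀⟩ := ‹Nonempty Y›
  refine isPreconnected_preimage_singleton_of_dense continuous_stoneCechFst
    continuous_stoneCechFst.isClosedMap (continuous_stoneCechSlice y₀)
    (rightInverse_stoneCechSlice_stoneCechFst y₀) denseRange_stoneCechUnit ?_ e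
  rintro _ ⟨⟨x, y⟩, rfl⟩
  refine ⟨range fun y' => stoneCechUnit (x, y'), ?_,
    isPreconnected_range (continuous_stoneCechUnit.comp (Continuous.prodMk_right x)),
    mem_range_self y, y₀, by simp⟩
  rintro _ ⟨y', rfl⟩
  simp

theorem exists_continuous_isGreatest_image_preimage_stoneCechFst [Nonempty Y] [CompactSpace Y]
    {L : Type*} [CompleteLinearOrder L] [TopologicalSpace L] [OrderTopology L]
    {g : StoneCech (X × Y) → L} (hg : Continuous g) :
    ∃ h : StoneCech X → L, Continuous h ∧
      ∀ e, IsGreatest (g '' (stoneCechFst ⁻¹' {e})) (h e) := by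
  have hφ : Continuous ↿fun x y => g (stoneCechUnit ((x, y) : X × Y)) :=
    hg.comp continuous_stoneCechUnit
  have hsup : Continuous fun x => sSup ((fun y => g (stoneCechUnit ((x, y) : X × Y))) '' univ) :=
    isCompact_univ.continuous_sSup hφ
  obtain ⟨h, hh, h_unit⟩ : ∃ h : StoneCech X → L, Continuous h ∧
      ∀ x, h (stoneCechUnit x) = sSup ((fun y => g (stoneCechUnit ((x, y) : X × Y))) '' univ) :=
    ⟨stoneCechExtend hsup, continuous_stoneCechExtend hsup, stoneCechExtend_stoneCechUnit hsup⟩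
  have hmax : IsClosed (stoneCechFst '' {q | h (stoneCechFst q) ≤ g q}) :=
    continuous_stoneCechFst.isClosedMap _ (isClosed_le (hh.comp continuous_stoneCechFst) hg)
  have hub : ∀ q, g q ≤ h (stoneCechFst q) :=
    isClosed_property denseRange_stoneCechUnit
      (isClosed_le hg (hh.comp continuous_stoneCechFst)) fun ⟨x, y⟩ => by
        rw [stoneCechFst_stoneCechUnit, h_unit]
        exact le_sSup ⟨y, mem_univ y, rfl⟩
  have hattained : ∀ e, e ∈ stoneCechFst '' {q | h (stoneCechFst q) ≤ g q} :=
    isClosed_property denseRange_stoneCechUnit hmax fun x => by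
      obtain ⟨y, -, hy⟩ := (isCompact_univ.image (hφ.comp (Continuous.prodMk_right x))).sSup_mem
        (univ_nonempty.image _)
      refine ⟨stoneCechUnit (x, y), ?_, stoneCechFst_stoneCechUnit _⟩
      rw [mem_ofPred_eq, stoneCechFst_stoneCechUnit, h_unit]
      exact hy.ge
  refine ⟨h, hh, fun e => ⟨?_, ?_⟩⟩
  · obtain ⟨q, hq, rfl⟩ := hattained e
    exact ⟨q, rfl, (hub q).antisymm hq⟩
  · rintro _ ⟨q, rfl, rfl⟩
    exact hub q

theorem isOpenMap_stoneCechFst [Nonempty Y] [CompactSpace Y] :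
    IsOpenMap (stoneCechFst : StoneCech (X × Y) → StoneCech X) := by
  intro W hW
  refine isOpen_iff_mem_nhds.2 ?_
  rintro _ ⟨p, hp, rfl⟩
  obtain ⟨g, hg0, hg1, -⟩ := exists_continuous_zero_one_of_isClosed hW.isClosed_compl
    (isClosed_singleton (x := p)) (by simpa using hp)
  obtain ⟨h, hh, hmax⟩ := exists_continuous_isGreatest_image_preimage_stoneCechFst
    (ENNReal.continuous_ofReal.comp g.continuous)
  have hp_pos : 0 < h (stoneCechFst p) :=
    lt_of_lt_of_le (by simp [hg1 (mem_singleton p)]) ((hmax _).2 ⟨p, rfl, rfl⟩)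
  filter_upwards [(isOpen_lt continuous_const hh).mem_nhds hp_pos] with e he
  obtain ⟨q, hqe, hq⟩ := (hmax e).1
  refine ⟨q, ?_, hqe⟩
  by_contra hqW
  exact he.ne' (hq.symm.trans (by simp [hg0 hqW]))

/-- The comb in `β(X × Y)` with base the copy of `H` at height `y` and with teeth the fibers
of `stoneCechFst` over `E`. The base is there to connect the teeth. -/
def stoneCechComb (E H : Set (StoneCech X)) (y : Y) : Set (StoneCech (X × Y)) :=
  stoneCechFst ⁻¹' E ∪ stoneCechSlice y '' H

variable {E H : Set (StoneCech X)}

theorem isClosed_stoneCechComb (hE : IsClosed E) (hH : IsClosed H) (y : Y) :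
    IsClosed (stoneCechComb E H y) :=
  (hE.preimage continuous_stoneCechFst).union ((continuous_stoneCechSlice y).isClosedMap H hH)

theorem stoneCechComb_subset_preimage (hEH : E ⊆ H) (y : Y) :
    stoneCechComb E H y ⊆ stoneCechFst ⁻¹' H := by
  refine union_subset (preimage_mono hEH) ?_
  rintro _ ⟨e, he, rfl⟩
  rwa [mem_preimage, rightInverse_stoneCechSlice_stoneCechFst]

theorem disjoint_stoneCechComb_range_stoneCechUnit (hEH : E ⊆ H)
    (hH : Disjoint H (range stoneCechUnit)) (y : Y) :
    Disjoint (stoneCechComb E H y) (range stoneCechUnit) := by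
  refine (hH.preimage stoneCechFst).mono (stoneCechComb_subset_preimage hEH y) ?_
  rintro _ ⟨z, rfl⟩
  exact ⟨z.1, (stoneCechFst_stoneCechUnit z).symm⟩

theorem isConnected_stoneCechComb [PreconnectedSpace Y] (hH : IsConnected H) (hEH : E ⊆ H)
    (y : Y) : IsConnected (stoneCechComb E H y) := by
  have : Nonempty Y := ⟨y⟩
  have hbase : IsConnected (stoneCechSlice y '' H) :=
    hH.image _ (continuous_stoneCechSlice y).continuousOn
  obtain ⟨b, hb⟩ := hbase.nonempty
  refine ⟨⟨b, Or.inr hb⟩, isPreconnected_of_forall b ?_⟩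
  rintro p (hp | hp)
  · have htooth : stoneCechFst ⁻¹' {stoneCechFst p} ⊆ stoneCechFst (Y := Y) ⁻¹' E :=
      preimage_mono (singleton_subset_iff.2 hp)
    exact ⟨_, union_subset_union_left _ htooth, Or.inr hb, Or.inl rfl,
      (isPreconnected_preimage_stoneCechFst _).union _
        (rightInverse_stoneCechSlice_stoneCechFst y _) (mem_image_of_mem _ (hEH hp))
        hbase.isPreconnected⟩
  · exact ⟨_, subset_union_right, hb, hp, hbase.isPreconnected⟩

theorem not_dense_iUnion_interior_fiber_stoneCechComb [CompactSpace Y] [T2Space Y] [Nontrivial Y]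
    {Z : Type*} {f : StoneCech X → Z} (hf : IsNowhereLocallyConstantOn f E) (hE : E.Nonempty)
    (y : Y) :
    ¬ Dense (⋃ c, interior ((fun k : stoneCechComb E H y => f (stoneCechFst k.1)) ⁻¹' {c})) := by
  have hoff : IsOpen {q | stoneCechExtend (continuous_snd (X := X)) q ≠ y} :=
    isOpen_ne.preimage (continuous_stoneCechExtend continuous_snd)
  refine (hf.preimage isOpenMap_stoneCechFst).not_dense_iUnion_interior_fiber subset_union_left
    hoff ?_ ?_
  · rintro _ ⟨hq, hqE | ⟨e, -, rfl⟩⟩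
    · exact hqE
    · exact (hq (stoneCechExtend_snd_stoneCechSlice y e)).elim
  · obtain ⟨e, he⟩ := hE
    obtain ⟨y', hy'⟩ := exists_ne y
    refine ⟨stoneCechSlice y' e, ?_, Or.inl ?_⟩
    · rwa [mem_ofPred_eq, stoneCechExtend_snd_stoneCechSlice]
    · rwa [mem_preimage, rightInverse_stoneCechSlice_stoneCechFst]

end StoneCechProd

theorem mapClusterPt_sin_atTop {c : ℝ} (hc : c ∈ Icc (-1) 1) : MapClusterPt c atTop Real.sin := by
  have hu : Tendsto (fun k : ℕ => Real.arcsin c + k * (2 * Real.pi)) atTop atTop :=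
    tendsto_atTop_add_const_left _ _
      (tendsto_natCast_atTop_atTop.atTop_mul_const (by positivity))
  refine MapClusterPt.of_comp hu (Tendsto.mapClusterPt (tendsto_const_nhds.congr fun k => ?_))
  simp [Real.sin_add_nat_mul_two_pi, Real.sin_arcsin hc.1 hc.2]

theorem exists_isNowhereLocallyConstantOn_subset_mapClusterSet_atTop :
    ∃ f : StoneCech ℝ → ℝ, Continuous f ∧ ∃ E ⊆ mapClusterSet atTop (stoneCechUnit (α := ℝ)),
      IsClosed E ∧ E.Nonempty ∧ IsNowhereLocallyConstantOn f E := by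
  let sinIcc : ℝ → Icc (-1 : ℝ) 1 := fun x => ⟨Real.sin x, Real.sin_mem_Icc x⟩
  have hsin : Continuous sinIcc := Real.continuous_sin.subtype_mk _
  have hsurj : stoneCechExtend hsin '' mapClusterSet atTop stoneCechUnit = univ := by
    rw [image_mapClusterSet (continuous_stoneCechExtend hsin), stoneCechExtend_extends]
    exact eq_univ_of_forall fun c =>
      IsInducing.subtypeVal.mapClusterPt_iff.1 (mapClusterPt_sin_atTop c.2)
  have : Nontrivial (Icc (-1 : ℝ) 1) := (Icc_infinite (by norm_num)).nontrivial.coe_sort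
  have : ConnectedSpace (Icc (-1 : ℝ) 1) :=
    isConnected_iff_connectedSpace.1 (isConnected_Icc (by norm_num))
  obtain ⟨E, hE, hEc, hEne, hEf⟩ := exists_subset_isNowhereLocallyConstantOn
    (continuous_stoneCechExtend hsin) isClosed_mapClusterSet.isCompact hsurj
  exact ⟨(↑) ∘ stoneCechExtend hsin, continuous_subtype_val.comp (continuous_stoneCechExtend hsin),
    E, hE, hEc, hEne, hEf.injective_comp Subtype.val_injective⟩

/-- There is a nonempty compact connected Hausdorff `F`-space `K` and a continuous
`f : K → ℝ` such that `Ω_f = ⋃_{x ∈ ℝ} Int f⁻¹({x})` is not dense in `K`. -/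
theorem connected_F_space_with_nondense_Omega :
    ∃ (K : Type) (_ : TopologicalSpace K), Nonempty K ∧ CompactSpace K ∧ T2Space K ∧
      ConnectedSpace K ∧ IsFSpace K ∧
      ∃ f : K → ℝ, Continuous f ∧ ¬ Dense (⋃ x : ℝ, interior (f ⁻¹' {x})) := by
  obtain ⟨f, hf, E, hEH, hE, hEne, hfE⟩ :=
    exists_isNowhereLocallyConstantOn_subset_mapClusterSet_atTop
  let H : Set (StoneCech ℝ) := mapClusterSet atTop stoneCechUnit
  let K : Set (StoneCech (ℝ × unitInterval)) := stoneCechComb E H 0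
  have hH : IsConnected H := ⟨hEne.mono hEH,
    isPreconnected_mapClusterSet atTop_basis (fun _ _ => isPreconnected_Ici)
      continuous_stoneCechUnit⟩
  have hHℝ : Disjoint H (range stoneCechUnit) :=
    disjoint_mapClusterSet_range isInducing_stoneCechUnit fun x hx =>
      hx.neBot.ne (disjoint_nhds_atTop x).eq_bot
  have hK : IsClosed K := isClosed_stoneCechComb hE isClosed_mapClusterSet 0
  have hKconn : IsConnected K := isConnected_stoneCechComb hH hEH 0
  exact ⟨K, inferInstance, hKconn.nonempty.to_subtype, isCompact_iff_compactSpace.1 hK.isCompact,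
    inferInstance, isConnected_iff_connectedSpace.1 hKconn,
    isFSpace_of_disjoint_range_stoneCechUnit hK
      (disjoint_stoneCechComb_range_stoneCechUnit hEH hHℝ 0),
    fun k => f (stoneCechFst k.1),
    hf.comp (continuous_stoneCechFst.comp continuous_subtype_val),
    not_dense_iUnion_interior_fiber_stoneCechComb hfE hEne 0⟩

end
end

section
/- Let δ be the least ordinal with X_δ = X_{δ+1}. Then δ is not a successor ordinal. -/
open Set Topology

noncomputable section

/-- `𝐒 = ℕ × [0,1]²` where `ℕ` is discrete and `[0,1]` is the unit interval. -/
abbrev bS : Type := ℕ × (unitInterval × unitInterval)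

/-- `βπ : β𝐒 → βℕ`, the Stone–Čech extension of the projection `π(n,x,y) = n`. -/
def betaPi : StoneCech bS → StoneCech ℕ :=
  stoneCechExtend (continuous_stoneCechUnit.comp continuous_fst)

/-- `βf : β𝐒 → [0,1]`, the Stone–Čech extension of `f(n,x,y) = x`. -/
def betaF : StoneCech bS → unitInterval :=
  stoneCechExtend (continuous_fst.comp continuous_snd)

/-- `S_u = βπ⁻¹(u)`, as a subset of `β𝐒` (carrying the subspace topology). -/
def Su (u : StoneCech ℕ) : Set (StoneCech bS) := betaPi ⁻¹' {u}

/-- `f_u : S_u → [0,1]`, the restriction of `βf` to `S_u`. -/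
def fu (u : StoneCech ℕ) : (Su u) → unitInterval := fun z => betaF z.1

/-- `L_t = f_u⁻¹(t) ∩ cl_{S_u} f_u⁻¹([0,t))`. -/
def Lset (u : StoneCech ℕ) (t : unitInterval) : Set (Su u) :=
  fu u ⁻¹' {t} ∩ closure (fu u ⁻¹' (Set.Ico 0 t))

/-- `R_t = f_u⁻¹(t) ∩ cl_{S_u} f_u⁻¹((t,1])`. -/
def Rset (u : StoneCech ℕ) (t : unitInterval) : Set (Su u) :=
  fu u ⁻¹' {t} ∩ closure (fu u ⁻¹' (Set.Ioc t 1))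

/-- The rectangle `P_{s,r} = S_u ∩ cl_{β𝐒}(ℕ × [s,r] × I)`, viewed as a subset of `S_u`. -/
def Pset (u : StoneCech ℕ) (s r : unitInterval) : Set (Su u) :=
  Subtype.val ⁻¹' closure (stoneCechUnit '' {p : bS | p.2.1 ∈ Set.Icc s r})

/-- `L_{s,t} = cl_{S_u}(⋃_{s<r<t} P_{s,r})`. -/
def Lst (u : StoneCech ℕ) (s t : unitInterval) : Set (Su u) :=
  closure (⋃ r ∈ Set.Ioo s t, Pset u s r)

/-- The interior of `B` in the subspace `A`, viewed as a subset of the ambient space. -/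
def relInt {Y : Type*} [TopologicalSpace Y] (A B : Set Y) : Set Y :=
  Subtype.val '' interior ((Subtype.val : A → Y) ⁻¹' B)

/-- The transfinite sequence `X_α ⊆ S_u`: `X_0 = S_u`,
`X_{α+1} = X_α \ ⋃_{t} Int_{X_α}(X_α ∩ f_u⁻¹(t))`, and `X_λ = ⋂_{β<λ} X_β` at limits. -/
def Xseq (u : StoneCech ℕ) : Ordinal → Set (Su u) := fun α =>
  Ordinal.limitRecOn α Set.univ
    (fun _ Xa => Xa \ ⋃ t : unitInterval, relInt Xa (Xa ∩ fu u ⁻¹' {t}))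
    (fun o _ ih => ⋂ (β : {β : Ordinal // β < o}), ih β.1 β.2)

/-- The bottom line `B_u = S_u ∩ cl_{β𝐒}(ℕ × I × {0})`, viewed as a subset of `S_u`. -/
def Bu (u : StoneCech ℕ) : Set (Su u) :=
  Subtype.val ⁻¹' closure (stoneCechUnit '' {p : bS | p.2.2 = 0})

/-- The top line `T_u = S_u ∩ cl_{β𝐒}(ℕ × I × {1})`, viewed as a subset of `S_u`. -/
def Tu (u : StoneCech ℕ) : Set (Su u) :=
  Subtype.val ⁻¹' closure (stoneCechUnit '' {p : bS | p.2.2 = 1})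

/-!
Write `X'` for the set obtained from a closed set `X` by removing the relative interiors of the
fibres of `f`. If the points of `X \ X'` take infinitely many `f`-values, choose points of `X \ X'`
whose values converge to some `b` without being equal to `b`, and let `p` be a cluster point of
them. Then `p ∈ X'` and `f p = b`. The chosen points and `X' ∩ {f ≠ b}` are separated `Fσ` sets, so
in an `F`-space their closures are disjoint; hence `f` is constant on `X'` near `p`, and `p ∉ X''`.

Infinitely many values come from self-similarity: the folding `t ↦ |2t - 1|` of the first coordinate
induces a continuous open self-map of `S_u` which pulls every `X_α` back to itself. So the set of
`f`-values of `X_α \ X_{α+1}` contains its inverse image under the folding, and is therefore empty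
or infinite.
-/

open Filter

section FSigma

variable {X Y : Type*} [TopologicalSpace X] [TopologicalSpace Y]

lemma isFSigma_of_isOpen {Z : Type*} [PseudoEMetricSpace Z] {s : Set Z} (hs : IsOpen s) :
    IsFSigma s := by
  obtain ⟨F, hF, -, hU, -⟩ := hs.exists_iUnion_isClosed
  exact ⟨F, hF, hU.symm⟩

lemma IsFSigma.preimage {s : Set Y} (hs : IsFSigma s) {g : X → Y} (hg : Continuous g) :
    IsFSigma (g ⁻¹' s) := by
  obtain ⟨F, hF, rfl⟩ := hs
  exact ⟨fun n => g ⁻¹' F n, fun n => (hF n).preimage hg, preimage_iUnion⟩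

lemma IsFSigma.inter_isClosed {s t : Set X} (hs : IsFSigma s) (ht : IsClosed t) :
    IsFSigma (s ∩ t) := by
  obtain ⟨F, hF, rfl⟩ := hs
  exact ⟨fun n => F n ∩ t, fun n => (hF n).inter ht, iUnion_inter t F⟩

lemma isFSigma_range [T1Space X] (z : ℕ → X) : IsFSigma (range z) :=
  ⟨fun n => {z n}, fun _ => isClosed_singleton, (iUnion_singleton_eq_range z).symm⟩

lemma IsFSigma.exists_continuous_pos_of_disjoint [NormalSpace X] {s t : Set X} (hs : IsFSigma s)
    (ht : IsClosed t) (hst : Disjoint s t) :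
    ∃ g : C(X, ℝ), (∀ x ∈ s, 0 < g x) ∧ ∀ x ∈ t, g x = 0 := by
  obtain ⟨F, hF, rfl⟩ := hs
  rw [disjoint_iUnion_left] at hst
  choose g hgt hgF hg01 using fun n =>
    exists_continuous_zero_one_of_isClosed ht (hF n) (hst n).symm
  have hbound : ∀ n x, ‖(1 / 2 : ℝ) ^ n * g n x‖ ≤ (1 / 2) ^ n := fun n x => by
    rw [norm_mul, Real.norm_of_nonneg (hg01 n x).1, Real.norm_of_nonneg (by positivity)]
    exact mul_le_of_le_one_right (by positivity) (hg01 n x).2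
  refine ⟨⟨fun x => ∑' n, (1 / 2 : ℝ) ^ n * g n x,
    continuous_tsum (fun n => by fun_prop) summable_geometric_two hbound⟩, fun x hx => ?_,
    fun x hx => ?_⟩
  · obtain ⟨n, hn⟩ := mem_iUnion.1 hx
    have hsum : Summable fun n => (1 / 2 : ℝ) ^ n * g n x :=
      summable_geometric_two.of_norm_bounded fun n => hbound n x
    refine hsum.tsum_pos (fun n => mul_nonneg (by positivity) (hg01 n x).1) n ?_
    simp [hgF n hn]
  · simp [fun n => hgt n hx]

lemma IsFSpace.disjoint_closure_of_separated [NormalSpace X] (hX : IsFSpace X) {s t : Set X}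
    (hs : IsFSigma s) (ht : IsFSigma t) (hst : Disjoint s (closure t))
    (hts : Disjoint (closure s) t) : Disjoint (closure s) (closure t) := by
  obtain ⟨g, hgs, hgt⟩ := hs.exists_continuous_pos_of_disjoint isClosed_closure hst
  obtain ⟨h, hht, hhs⟩ := ht.exists_continuous_pos_of_disjoint isClosed_closure hts.symm
  let d : X → ℝ := fun x => g x - h x
  have hd : Continuous d := by fun_prop
  have hsd : s ⊆ d ⁻¹' Ioi 0 := fun x hx => by
    simpa [d, hhs x (subset_closure hx)] using hgs x hx
  have htd : t ⊆ d ⁻¹' Iio 0 := fun x hx => by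
    simpa [d, hgt x (subset_closure hx)] using hht x hx
  exact (hX _ _ (isOpen_Ioi.preimage hd) (isOpen_Iio.preimage hd)
    ((isFSigma_of_isOpen isOpen_Ioi).preimage hd) ((isFSigma_of_isOpen isOpen_Iio).preimage hd)
    (Ioi_disjoint_Iio_same.preimage d)).mono (closure_mono hsd) (closure_mono htd)

lemma closure_range_subset_of_tendsto [T1Space X] [T2Space Y] {f : X → Y} (hf : Continuous f)
    {z : ℕ → X} {b : Y} (hz : Tendsto (f ∘ z) atTop (𝓝 b)) :
    closure (range z) ⊆ range z ∪ f ⁻¹' {b} := by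
  intro x hx
  by_contra! hxz
  rw [mem_union, not_or] at hxz
  obtain ⟨U, V, hU, hV, hxU, hbV, hUV⟩ := t2_separation hxz.2
  have hfin : (f ⁻¹' U ∩ range z).Finite := by
    have hev : ∀ᶠ n in atTop, f (z n) ∈ V := hz.eventually_mem (hV.mem_nhds hbV)
    rw [← Nat.cofinite_eq_atTop, eventually_cofinite] at hev
    refine (hev.image z).subset ?_
    rintro _ ⟨hn, n, rfl⟩
    exact ⟨n, disjoint_left.1 hUV hn, rfl⟩
  have hxcl : x ∈ closure (f ⁻¹' U ∩ range z) := (hU.preimage hf).inter_closure ⟨hxU, hx⟩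
  exact hxz.1 (hfin.isClosed.closure_eq ▸ hxcl).2

lemma IsFSpace.disjoint_closure_range_of_tendsto {Z : Type*} [T4Space X] [MetricSpace Z]
    (hX : IsFSpace X) {f : X → Z} (hf : Continuous f) {B : Set X} (hB : IsClosed B) {z : ℕ → X}
    {b : Z} (hz : ∀ n, z n ∉ B) (hlim : Tendsto (f ∘ z) atTop (𝓝 b)) :
    Disjoint (closure (range z)) (closure (f ⁻¹' {b}ᶜ ∩ B)) := by
  refine hX.disjoint_closure_of_separated (isFSigma_range z)
    (((isFSigma_of_isOpen isOpen_compl_singleton).preimage hf).inter_isClosed hB) ?_ ?_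
  · have hclosure : closure (f ⁻¹' {b}ᶜ ∩ B) ⊆ B := hB.closure_subset_iff.2 inter_subset_right
    rw [disjoint_left]
    rintro _ ⟨n, rfl⟩ hn
    exact hz n (hclosure hn)
  · rw [disjoint_left]
    rintro x hx ⟨hxb, hxB⟩
    rcases closure_range_subset_of_tendsto hf hlim hx with ⟨n, rfl⟩ | hxb'
    · exact hz n hxB
    · exact hxb hxb'

end FSigma

section FiberDeriv

variable {K L Y Z : Type*} [TopologicalSpace K] [TopologicalSpace L]

lemma mem_relInt {A B : Set K} {x : K} : x ∈ relInt A B ↔ x ∈ A ∧ B ∈ 𝓝[A] x := by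
  simp only [relInt, mem_image, mem_interior_iff_mem_nhds, preimage_coe_mem_nhds_subtype,
    Subtype.exists, exists_and_left, exists_prop, exists_eq_right_right]
  exact and_comm

/-- The derivative of `A` along `f`: the set `A` without the relative interiors of its `f`-fibres.
It is the successor step of the sequence `X_α`. -/
def fiberDeriv (f : K → Z) (A : Set K) : Set K :=
  A \ ⋃ t, relInt A (A ∩ f ⁻¹' {t})

lemma mem_fiberDeriv {f : K → Z} {A : Set K} {x : K} :
    x ∈ fiberDeriv f A ↔ x ∈ A ∧ ∃ᶠ y in 𝓝[A] x, f y ≠ f x := by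
  simp only [fiberDeriv, Set.mem_sdiff, mem_iUnion, not_exists, mem_relInt, not_and]
  refine and_congr_right fun hx => ⟨fun h hev => ?_, fun h t _ ht => ?_⟩
  · refine h (f x) hx ?_
    filter_upwards [self_mem_nhdsWithin, hev] with y hyA hy using ⟨hyA, not_not.1 hy⟩
  · have hxt : f x = t := (mem_of_mem_nhdsWithin hx ht).2
    refine h ?_
    filter_upwards [ht] with y hy using not_not.2 (hy.2.trans hxt.symm)

lemma fiberDeriv_subset (f : K → Z) (A : Set K) : fiberDeriv f A ⊆ A := sdiff_subset

lemma isClosed_fiberDeriv (f : K → Z) {A : Set K} (hA : IsClosed A) :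
    IsClosed (fiberDeriv f A) := by
  refine closure_subset_iff_isClosed.1 fun x hx => mem_fiberDeriv.2
    ⟨hA.closure_subset_iff.2 (fiberDeriv_subset f A) hx, fun hev => ?_⟩
  have hfreq : ∃ᶠ y in 𝓝[A] x, y ∈ fiberDeriv f A := frequently_nhdsWithin_iff.2 <|
    (mem_closure_iff_frequently.1 hx).mono fun y hy => ⟨hy, fiberDeriv_subset f A hy⟩
  obtain ⟨y, hy, hyx, hnear⟩ :=
    (hfreq.and_eventually (hev.and (eventually_eventually_nhdsWithin.2 hev))).exists
  refine (mem_fiberDeriv.1 hy).2 ?_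
  filter_upwards [hnear] with w hw
  rw [not_not] at hyx hw ⊢
  exact hw.trans hyx.symm

lemma preimage_fiberDeriv [TopologicalSpace Z] [T1Space Z] {f : K → Z} {g : L → Y} {G : K → L}
    {φ : Z → Y} (hf : Continuous f) (hG : Continuous G) (hGo : IsOpenMap G)
    (hφ : ∀ t, (φ ⁻¹' {t}).Finite) (hfG : ∀ x, g (G x) = φ (f x)) (A : Set L) :
    G ⁻¹' fiberDeriv g A = fiberDeriv f (G ⁻¹' A) := by
  ext x
  have hmap : map G (𝓝[G ⁻¹' A] x) = 𝓝[A] (G x) := by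
    rw [nhdsWithin, ← comap_principal, Filter.push_pull, hGo.map_nhds_eq hG.continuousAt,
      nhdsWithin]
  have hisolated : ∀ᶠ y in 𝓝[G ⁻¹' A] x, φ (f y) = φ (f x) ↔ f y = f x := by
    have hopen : IsOpen (φ ⁻¹' {φ (f x)} \ {f x})ᶜ :=
      ((hφ _).subset sdiff_subset).isClosed.isOpen_compl
    filter_upwards [mem_nhdsWithin_of_mem_nhds ((hopen.preimage hf).mem_nhds (by simp))] with y hy
    exact ⟨fun h => by_contra fun hne => hy ⟨h, hne⟩, congrArg φ⟩
  rw [mem_preimage, mem_fiberDeriv, mem_fiberDeriv, mem_preimage, ← hmap, frequently_map]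
  simp only [hfG]
  exact and_congr_right fun _ => frequently_congr (hisolated.mono fun y hy => not_congr hy)

lemma IsFSpace.mem_fiberDeriv_sdiff_of_mapClusterPt [T4Space K] [MetricSpace Z] (hK : IsFSpace K)
    {f : K → Z} (hf : Continuous f) {A : Set K} (hA : IsClosed A) {z : ℕ → K} {b : Z} {p : K}
    (hz : ∀ n, z n ∈ A \ fiberDeriv f A) (hzb : ∀ n, f (z n) ≠ b)
    (hlim : Tendsto (f ∘ z) atTop (𝓝 b)) (hp : MapClusterPt p atTop z) :
    p ∈ fiberDeriv f A \ fiberDeriv f (fiberDeriv f A) := by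
  have hfp : f p = b :=
    eq_of_nhds_neBot ((hp.continuousAt_comp hf.continuousAt).clusterPt.mono hlim)
  have hpz : p ∈ closure (range z) := mem_closure_iff_clusterPt.2 <| hp.clusterPt.mono <|
    tendsto_principal.2 (.of_forall mem_range_self)
  have hpA : p ∈ A :=
    hA.closure_subset_iff.2 (range_subset_iff.2 fun n => (hz n).1) hpz
  have hA' : IsClosed (fiberDeriv f A) := isClosed_fiberDeriv f hA
  have hp' : p ∈ fiberDeriv f A := by
    refine mem_fiberDeriv.2 ⟨hpA, fun hev => ?_⟩
    obtain ⟨n, hn⟩ := (hp.frequently (eventually_nhdsWithin_iff.1 hev)).exists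
    exact hn (hz n).1 (hfp ▸ hzb n)
  have hdisj := hK.disjoint_closure_range_of_tendsto hf hA' (fun n => (hz n).2) hlim
  refine ⟨hp', fun hp'' => ?_⟩
  have hfreq := frequently_nhdsWithin_iff.1 (mem_fiberDeriv.1 hp'').2
  obtain ⟨y, ⟨hyp, hyA'⟩, hy⟩ := (hfreq.and_eventually
    (isClosed_closure.isOpen_compl.mem_nhds (disjoint_left.1 hdisj hpz))).exists
  exact hy (subset_closure ⟨hfp ▸ hyp, hyA'⟩)

lemma IsFSpace.fiberDeriv_ne_of_infinite_image [CompactSpace K] [T2Space K] [MetricSpace Z]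
    (hK : IsFSpace K) {f : K → Z} (hf : Continuous f) {A : Set K} (hA : IsClosed A)
    (hinf : (f '' (A \ fiberDeriv f A)).Infinite) :
    fiberDeriv f A ≠ fiberDeriv f (fiberDeriv f A) := by
  obtain ⟨b, -, hb⟩ := hinf.exists_accPt_of_subset_isCompact (isCompact_range hf)
    (image_subset_range f _)
  rw [accPt_principal_iff_clusterPt, ← mem_closure_iff_clusterPt, mem_closure_iff_seq_limit] at hb
  obtain ⟨v, hv, hvb⟩ := hb
  choose z hz hzv using fun n => (hv n).1
  obtain ⟨p, hp⟩ := exists_clusterPt_of_compactSpace (map z atTop)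
  obtain ⟨hmem, hnotMem⟩ := hK.mem_fiberDeriv_sdiff_of_mapClusterPt hf hA hz
    (fun n => hzv n ▸ (hv n).2) (hvb.congr fun n => (hzv n).symm) hp
  exact fun heq => hnotMem (heq ▸ hmem)

/-- The transfinite sequence of iterated derivatives of the whole space along `f`. -/
def iterFiberDeriv (f : K → Z) : Ordinal → Set K := fun α =>
  Ordinal.limitRecOn α univ (fun _ A => fiberDeriv f A)
    (fun o _ A => ⋂ β : {β : Ordinal // β < o}, A β.1 β.2)

lemma iterFiberDeriv_zero (f : K → Z) : iterFiberDeriv f 0 = univ :=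
  Ordinal.limitRecOn_zero ..

lemma iterFiberDeriv_add_one (f : K → Z) (α : Ordinal) :
    iterFiberDeriv f (α + 1) = fiberDeriv f (iterFiberDeriv f α) :=
  Ordinal.limitRecOn_add_one ..

lemma iterFiberDeriv_of_isSuccLimit (f : K → Z) {o : Ordinal} (ho : Order.IsSuccLimit o) :
    iterFiberDeriv f o = ⋂ β : {β : Ordinal // β < o}, iterFiberDeriv f β :=
  Ordinal.limitRecOn_limit _ _ _ _ ho

lemma isClosed_iterFiberDeriv (f : K → Z) (α : Ordinal) : IsClosed (iterFiberDeriv f α) := by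
  induction α using Ordinal.limitRecOn with
  | zero => exact iterFiberDeriv_zero f ▸ isClosed_univ
  | add_one α ih => exact iterFiberDeriv_add_one f α ▸ isClosed_fiberDeriv f ih
  | limit o ho ih =>
    exact iterFiberDeriv_of_isSuccLimit f ho ▸ isClosed_iInter fun β => ih β.1 β.2

lemma preimage_iterFiberDeriv [TopologicalSpace Z] [T1Space Z] {f : K → Z} {g : L → Y} {G : K → L}
    {φ : Z → Y} (hf : Continuous f) (hG : Continuous G) (hGo : IsOpenMap G)
    (hφ : ∀ t, (φ ⁻¹' {t}).Finite) (hfG : ∀ x, g (G x) = φ (f x)) (α : Ordinal) :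
    G ⁻¹' iterFiberDeriv g α = iterFiberDeriv f α := by
  induction α using Ordinal.limitRecOn with
  | zero => simp only [iterFiberDeriv_zero, preimage_univ]
  | add_one α ih =>
    rw [iterFiberDeriv_add_one, iterFiberDeriv_add_one, preimage_fiberDeriv hf hG hGo hφ hfG, ih]
  | limit o ho ih =>
    rw [iterFiberDeriv_of_isSuccLimit g ho, iterFiberDeriv_of_isSuccLimit f ho, preimage_iInter]
    exact iInter_congr fun β => ih β.1 β.2

/-- Here `G` is a self-similarity of `(K, f)` covering `φ`. By `hlift` and `hinf`, the set of
`f`-values of the points lost at one step is infinite unless it is empty. -/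
theorem delta_not_successor_general [CompactSpace K] [T2Space K] [MetricSpace Z] (hK : IsFSpace K)
    {f : K → Z} (hf : Continuous f) {G : K → K} (hG : Continuous G) (hGo : IsOpenMap G)
    {φ : Z → Z} (hφ : ∀ t, (φ ⁻¹' {t}).Finite) (hfG : ∀ x, f (G x) = φ (f x))
    (hlift : ∀ x t, φ t = f x → ∃ y, G y = x ∧ f y = t)
    (hinf : ∀ T : Set Z, T.Nonempty → φ ⁻¹' T ⊆ T → T.Infinite)
    {δ : Ordinal} (hδ : iterFiberDeriv f δ = iterFiberDeriv f (δ + 1))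
    (hmin : ∀ β < δ, iterFiberDeriv f β ≠ iterFiberDeriv f (β + 1)) (β : Ordinal) :
    δ ≠ β + 1 := by
  rintro rfl
  have hne := hmin β (lt_add_one β)
  simp only [iterFiberDeriv_add_one] at hδ hne
  set A := iterFiberDeriv f β
  have hGA : G ⁻¹' A = A := preimage_iterFiberDeriv hf hG hGo hφ hfG β
  have hGA' : G ⁻¹' fiberDeriv f A = fiberDeriv f A := by
    rw [preimage_fiberDeriv hf hG hGo hφ hfG, hGA]
  refine hK.fiberDeriv_ne_of_infinite_image hf (isClosed_iterFiberDeriv f β) (hinf _ ?_ ?_) hδ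
  · exact (sdiff_nonempty.2 fun h => hne (h.antisymm (fiberDeriv_subset f A))).image f
  · rintro t ⟨x, hx, hxt⟩
    obtain ⟨y, rfl, rfl⟩ := hlift x t hxt.symm
    have hy : y ∈ G ⁻¹' A \ G ⁻¹' fiberDeriv f A := hx
    rw [hGA, hGA'] at hy
    exact ⟨y, hy, rfl⟩

end FiberDeriv

lemma isOpenMap_of_continuous_sections {X Y ι : Type*} [TopologicalSpace X] [TopologicalSpace Y]
    {G : X → Y} {s : ι → Y → X} (hs : ∀ i, Continuous (s i)) (hGs : ∀ i y, G (s i y) = y)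
    (hsG : ∀ x, ∃ i, s i (G x) = x) : IsOpenMap G := by
  intro U hU
  have himage : G '' U = ⋃ i, s i ⁻¹' U := by
    ext y
    rw [mem_iUnion]
    constructor
    · rintro ⟨x, hx, rfl⟩
      obtain ⟨i, hi⟩ := hsG x
      exact ⟨i, mem_preimage.2 (hi.symm ▸ hx)⟩
    · rintro ⟨i, hi⟩
      exact ⟨s i y, hi, hGs i y⟩
  exact himage ▸ isOpen_iUnion fun i => hU.preimage (hs i)

section Folding

/-- The folding `t ↦ |2t - 1|` of the unit interval at its midpoint. -/
def foldI : C(unitInterval, unitInterval) where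
  toFun t := ⟨|2 * (t : ℝ) - 1|, abs_nonneg _, abs_le.2 ⟨by linarith [t.2.1], by linarith [t.2.2]⟩⟩
  continuous_toFun := by fun_prop

/-- The two continuous sections of the folding: `t ↦ (1 + t) / 2` for `true` and
`t ↦ (1 - t) / 2` for `false`. -/
def foldSection : Bool → C(unitInterval, unitInterval)
  | true =>
    { toFun t := ⟨(1 + (t : ℝ)) / 2, by linarith [t.2.1], by linarith [t.2.2]⟩
      continuous_toFun := by fun_prop }
  | false =>
    { toFun t := ⟨(1 - (t : ℝ)) / 2, by linarith [t.2.2], by linarith [t.2.1]⟩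
      continuous_toFun := by fun_prop }

lemma coe_foldI (t : unitInterval) : (foldI t : ℝ) = |2 * (t : ℝ) - 1| := rfl

lemma coe_foldSection_true (t : unitInterval) : (foldSection true t : ℝ) = (1 + t) / 2 := rfl

lemma coe_foldSection_false (t : unitInterval) : (foldSection false t : ℝ) = (1 - t) / 2 := rfl

lemma foldI_foldSection (i : Bool) (t : unitInterval) : foldI (foldSection i t) = t := by
  have ht := t.2.1
  ext
  cases i
  · rw [coe_foldI, coe_foldSection_false, abs_of_nonpos (by linarith)]
    ring
  · rw [coe_foldI, coe_foldSection_true, abs_of_nonneg (by linarith)]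
    ring

lemma exists_foldSection_foldI (t : unitInterval) : ∃ i, foldSection i (foldI t) = t := by
  rcases le_total 0 (2 * (t : ℝ) - 1) with h | h
  · refine ⟨true, Subtype.ext ?_⟩
    rw [coe_foldSection_true, coe_foldI, abs_of_nonneg h]
    ring
  · refine ⟨false, Subtype.ext ?_⟩
    rw [coe_foldSection_false, coe_foldI, abs_of_nonpos h]
    ring

lemma finite_preimage_foldI (t : unitInterval) : (foldI ⁻¹' {t}).Finite := by
  refine (finite_range fun i => foldSection i t).subset ?_
  rintro s rfl
  exact exists_foldSection_foldI s

lemma infinite_of_preimage_foldI_subset {T : Set unitInterval} (hT : T.Nonempty)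
    (hfold : foldI ⁻¹' T ⊆ T) : T.Infinite := by
  have hmem : ∀ i, ∀ t ∈ T, foldSection i t ∈ T := fun i t ht =>
    hfold (by rwa [mem_preimage, foldI_foldSection])
  intro hfin
  obtain ⟨t, ht⟩ := hT
  have hlt_one : foldSection false t < 1 := by
    rw [← Subtype.coe_lt_coe, coe_foldSection_false, Icc.coe_one]
    linarith [t.2.1]
  obtain ⟨m, ⟨hmT, hm1⟩, hmax⟩ := exists_max_image (T ∩ Iio 1) id (hfin.inter_of_left _)
    ⟨_, hmem false t ht, hlt_one⟩
  have hm1' : (m : ℝ) < 1 := hm1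
  have hnext : foldSection true m ∈ T ∩ Iio 1 := by
    refine ⟨hmem true m hmT, ?_⟩
    rw [mem_Iio, ← Subtype.coe_lt_coe, coe_foldSection_true, Icc.coe_one]
    linarith
  have hle : (foldSection true m : ℝ) ≤ m := hmax _ hnext
  rw [coe_foldSection_true] at hle
  linarith

end Folding

section StoneCechSquare

lemma continuous_betaF : Continuous betaF := continuous_stoneCechExtend _

lemma continuous_betaPi : Continuous betaPi := continuous_stoneCechExtend _

lemma betaF_stoneCechUnit (p : bS) : betaF (stoneCechUnit p) = p.2.1 :=
  stoneCechExtend_stoneCechUnit _ p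

lemma betaPi_stoneCechUnit (p : bS) : betaPi (stoneCechUnit p) = stoneCechUnit p.1 :=
  stoneCechExtend_stoneCechUnit _ p

/-- The Stone–Čech extension `β𝐒 → β𝐒` of `(n, x, y) ↦ (n, m x, y)`. -/
def betaMap (m : C(unitInterval, unitInterval)) : StoneCech bS → StoneCech bS :=
  stoneCechExtend (g := fun p : bS => stoneCechUnit (p.1, m p.2.1, p.2.2))
    (continuous_stoneCechUnit.comp (by fun_prop))

lemma continuous_betaMap (m : C(unitInterval, unitInterval)) : Continuous (betaMap m) :=
  continuous_stoneCechExtend _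

lemma betaMap_stoneCechUnit (m : C(unitInterval, unitInterval)) (p : bS) :
    betaMap m (stoneCechUnit p) = stoneCechUnit (p.1, m p.2.1, p.2.2) :=
  stoneCechExtend_stoneCechUnit _ p

lemma betaF_betaMap (m : C(unitInterval, unitInterval)) (z : StoneCech bS) :
    betaF (betaMap m z) = m (betaF z) := by
  refine congrFun (stoneCech_hom_ext (continuous_betaF.comp (continuous_betaMap m))
    (m.continuous.comp continuous_betaF) (funext fun p => ?_)) z
  simp only [Function.comp_apply, betaMap_stoneCechUnit, betaF_stoneCechUnit]

lemma betaPi_betaMap (m : C(unitInterval, unitInterval)) (z : StoneCech bS) :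
    betaPi (betaMap m z) = betaPi z := by
  refine congrFun (stoneCech_hom_ext (continuous_betaPi.comp (continuous_betaMap m))
    continuous_betaPi (funext fun p => ?_)) z
  simp only [Function.comp_apply, betaMap_stoneCechUnit, betaPi_stoneCechUnit]

/-- The points of `β𝐒` with this property form a finite union of closed sets containing the dense
set `𝐒`. -/
lemma exists_betaMap_betaMap_eq_self {ι : Type*} [Finite ι] {s : ι → C(unitInterval, unitInterval)}
    {m : C(unitInterval, unitInterval)} (h : ∀ t, ∃ i, s i (m t) = t) (z : StoneCech bS) :
    ∃ i, betaMap (s i) (betaMap m z) = z := by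
  refine denseRange_stoneCechUnit.induction_on z ?_ fun p => ?_
  · simp only [ofPred_exists]
    exact isClosed_iUnion_of_finite fun i => isClosed_eq
      ((continuous_betaMap (s i)).comp (continuous_betaMap m)) continuous_id
  · obtain ⟨i, hi⟩ := h p.2.1
    exact ⟨i, by rw [betaMap_stoneCechUnit, betaMap_stoneCechUnit, hi]⟩

/-- The self-map of `S_u` induced by a self-map `m` of the first coordinate. -/
def suMap (u : StoneCech ℕ) (m : C(unitInterval, unitInterval)) (z : Su u) : Su u :=
  ⟨betaMap m z, (betaPi_betaMap m z).trans z.2⟩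

variable (u : StoneCech ℕ)

lemma continuous_fu : Continuous (fu u) := continuous_betaF.comp continuous_subtype_val

lemma continuous_suMap (m : C(unitInterval, unitInterval)) : Continuous (suMap u m) :=
  ((continuous_betaMap m).comp continuous_subtype_val).subtype_mk _

lemma fu_suMap (m : C(unitInterval, unitInterval)) (z : Su u) : fu u (suMap u m z) = m (fu u z) :=
  betaF_betaMap m z

lemma exists_suMap_suMap_eq_self {ι : Type*} [Finite ι] {s : ι → C(unitInterval, unitInterval)}
    {m : C(unitInterval, unitInterval)} (h : ∀ t, ∃ i, s i (m t) = t) (z : Su u) :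
    ∃ i, suMap u (s i) (suMap u m z) = z :=
  (exists_betaMap_betaMap_eq_self h z.1).imp fun _ hi => Subtype.ext hi

lemma suMap_foldI_suMap_foldSection (i : Bool) (z : Su u) :
    suMap u foldI (suMap u (foldSection i) z) = z := by
  obtain ⟨_, h⟩ := exists_suMap_suMap_eq_self (s := fun _ : Unit => foldI) u
    (fun t => ⟨(), foldI_foldSection i t⟩) z
  exact h

lemma isOpenMap_suMap_foldI : IsOpenMap (suMap u foldI) :=
  isOpenMap_of_continuous_sections (fun i => continuous_suMap u (foldSection i))
    (suMap_foldI_suMap_foldSection u) (exists_suMap_suMap_eq_self u exists_foldSection_foldI)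

lemma exists_suMap_foldI_eq_and_fu_eq (z : Su u) (t : unitInterval) (ht : foldI t = fu u z) :
    ∃ w, suMap u foldI w = z ∧ fu u w = t := by
  obtain ⟨i, hi⟩ := exists_foldSection_foldI t
  exact ⟨suMap u (foldSection i) z, suMap_foldI_suMap_foldSection u i z, by
    rw [fu_suMap, ← ht, hi]⟩

end StoneCechSquare

/-- The least ordinal `δ` with `X_δ = X_{δ+1}` is not a successor ordinal. -/
theorem delta_not_successor (u : StoneCech ℕ)
    (hu : ∀ n : ℕ, u ≠ stoneCechUnit n)
    (hne : (Su u).Nonempty) (hcomp : IsCompact (Su u)) (hconn : IsConnected (Su u))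
    (hFsp : IsFSpace (Su u))
    (hP : ∀ s r : unitInterval, s < r → IsConnected (Pset u s r))
    (δ : Ordinal) (hδ : Xseq u δ = Xseq u (δ + 1))
    (hmin : ∀ β < δ, Xseq u β ≠ Xseq u (β + 1)) :
    ∀ β : Ordinal, δ ≠ β + 1 := by
  have : CompactSpace (Su u) := isCompact_iff_compactSpace.1 hcomp
  exact delta_not_successor_general hFsp (continuous_fu u) (continuous_suMap u foldI)
    (isOpenMap_suMap_foldI u) finite_preimage_foldI (fu_suMap u foldI)
    (exists_suMap_foldI_eq_and_fu_eq u) (fun _ => infinite_of_preimage_foldI_subset) hδ hmin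

end
end
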